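/- The language L = { a^r b a^q b^m : r, q, m ≥ 2 and q is a perfect square } over the alphabet {a, b} is not even-linear (not 1-rated linear); consequently, L is not regular. -/

import Mathlib

/-!
In a rated linear grammar the two ends of a word are consumed at proportional speeds, so the depth
of a cut of a derivation determines how far it has progressed on either side. Applying the
pigeonhole principle to the nonterminals at successive cuts below a prescribed depth `n` gives a
pumping lemma `p = uvxyz` in which the position of the loop can be chosen: `v` starts at or after
position `n` and ends within a bounded distance of it, and `|y|`, `|z|` are proportional to `|v|`,
`|u|`.

For an even-linear grammar and the word `a²ba^qb^(q+3)` with `q = j²`, pumping at depth `3` puts `v`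
in the block `a^q` and `y` in the block `b^(q+3)`. Pumping once yields `a²ba^(q+d)b^(q+d+3)` with
`0 < d ≤ j` once `j` is large, and `q + d` lies strictly between `j²` and `(j+1)²`.

Regular languages are rated linear for every rate: a nonterminal `(s, F)` generates the words
leading an automaton from the state `s` into the set of states `F`.
-/

/-- The `i`-fold repetition `v^i` of a word `v`. -/
def wordPow {T : Type} (v : List T) : ℕ → List T
  | 0 => []
  | n + 1 => v ++ wordPow v n

/-- A production of a linear grammar: either `A → u` (with `u` a terminal word)
or `A → u B w` (with `u, w` terminal words and `B` a nonterminal). -/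
structure LinearRule (T N : Type) where
  input : N
  output : List T ⊕ (List T × N × List T)

/-- `LinDerives rs A p` : from nonterminal `A`, the linear productions in `rs`
derive the terminal word `p`. -/
inductive LinDerives {T N : Type} (rs : List (LinearRule T N)) : N → List T → Prop
  | terminal {A : N} {u : List T} (hr : (⟨A, Sum.inl u⟩ : LinearRule T N) ∈ rs) :
      LinDerives rs A u
  | step {A B : N} {u w p : List T}
      (hr : (⟨A, Sum.inr (u, B, w)⟩ : LinearRule T N) ∈ rs)
      (hp : LinDerives rs B p) :
      LinDerives rs A (u ++ p ++ w)

/-- A linear grammar: a type of nonterminals, a start symbol, and a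
finite list of linear productions. -/
structure LinearGrammar (T : Type) where
  NT : Type
  start : NT
  rules : List (LinearRule T NT)

/-- The language generated by a linear grammar. -/
def LinearGrammar.language {T : Type} (G : LinearGrammar T) : Set (List T) :=
  {p | LinDerives G.rules G.start p}

/-- A linear grammar is `(g/h)`-rated linear (`k = g/h`) if every production
`A → u B w` satisfies `h * |w| = g * |u|`. -/
def LinearGrammar.IsRated {T : Type} (g h : ℕ) (G : LinearGrammar T) : Prop :=
  ∀ r ∈ G.rules, ∀ u w, ∀ B : G.NT, r.output = Sum.inr (u, B, w) →
    h * w.length = g * u.length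

/-- A grammar generates exactly the language `L`, up to the empty word. -/
def LinearGrammar.GeneratesModEmpty {T : Type} (G : LinearGrammar T) (L : Set (List T)) :
    Prop :=
  ∀ p : List T, p ≠ [] → (p ∈ L ↔ p ∈ G.language)

/-- A language is linear if some linear grammar generates it, up to the empty word. -/
def IsLinearLang {T : Type} (L : Set (List T)) : Prop :=
  ∃ G : LinearGrammar T, G.GeneratesModEmpty L

/-- A language is `(g/h)`-rated linear if some `(g/h)`-rated linear grammar
generates it, up to the empty word. -/
def IsRatedLinearLang {T : Type} (g h : ℕ) (L : Set (List T)) : Prop :=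
  ∃ G : LinearGrammar T, G.IsRated g h ∧ G.GeneratesModEmpty L

/-- A `k`-linear grammar: a linear grammar together with the extra production
`S → S₁S₂⋯S_k` from a start symbol `S`, where none of the `Sᵢ` (the `heads`)
occurs on the right-hand side of any other production and `S` occurs in no other
production at all (the latter is automatic here, since the start symbol is kept
as a fresh symbol outside the type `NT` of the remaining nonterminals). -/
structure KLinearGrammar (T : Type) (k : ℕ) where
  NT : Type
  heads : Fin k → NT
  rules : List (LinearRule T NT)
  heads_not_on_rhs : ∀ r ∈ rules, ∀ u w, ∀ B : NT, r.output = Sum.inr (u, B, w) →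
    ∀ i : Fin k, B ≠ heads i

/-- The language generated by a `k`-linear grammar: as the start symbol occurs
only in the production `S → S₁S₂⋯S_k`, it consists of the concatenations
`p₁p₂⋯p_k` where each `pᵢ` is derived from `Sᵢ` by the linear productions. -/
def KLinearGrammar.language {T : Type} {k : ℕ} (G : KLinearGrammar T k) : Set (List T) :=
  {p | ∃ ps : Fin k → List T, p = (List.ofFn ps).flatten ∧
    ∀ i : Fin k, LinDerives G.rules (G.heads i) (ps i)}

/-- A language is `k`-linear if some `k`-linear grammar generates it, up to the
empty word. -/
def IsKLinearLang {T : Type} (k : ℕ) (L : Set (List T)) : Prop :=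
  ∃ G : KLinearGrammar T k, ∀ p : List T, p ≠ [] → (p ∈ L ↔ p ∈ G.language)

/-- A language is metalinear if it is `k`-linear for some positive integer `k`. -/
def IsMetalinearLang {T : Type} (L : Set (List T)) : Prop :=
  ∃ k : ℕ, 0 < k ∧ IsKLinearLang k L

/-- The language `{aʳ b a^q bᵐ : r, q, m ≥ 2, q a perfect square}` (Example 12).
Here the alphabet `{a, b}` is `Fin 2` with `a = 0`, `b = 1`. -/
def sqLang : Language (Fin 2) :=
  {p | ∃ r q m : ℕ, 2 ≤ r ∧ 2 ≤ q ∧ 2 ≤ m ∧ (∃ j : ℕ, q = j ^ 2) ∧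
    p = List.replicate r 0 ++ [1] ++ List.replicate q 0 ++ List.replicate m 1}

lemma wordPow_succ' {T : Type} (v : List T) (n : ℕ) : wordPow v (n + 1) = wordPow v n ++ v := by
  induction n with
  | zero => simp [wordPow]
  | succ n ih => rw [wordPow, ih, ← List.append_assoc, ← wordPow, ih]

lemma wordPow_replicate {T : Type} (d n : ℕ) (a : T) :
    wordPow (List.replicate d a) n = List.replicate (n * d) a := by
  induction n with
  | zero => simp [wordPow]
  | succ n ih => rw [wordPow, ih, List.replicate_append_replicate, Nat.succ_mul, Nat.add_comm]

lemma exists_eq_append_of_append_eq {α : Type*} {u v x y : List α} (heq : u ++ v = x ++ y)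
    (hlen : x.length ≤ u.length) : ∃ s, u = x ++ s ∧ y = s ++ v := by
  obtain ⟨s, rfl⟩ := List.prefix_of_prefix_length_le ⟨y, rfl⟩ ⟨v, heq⟩ hlen
  exact ⟨s, rfl, by simpa using heq.symm⟩

/-- `LinReaches rs A u B w`: the linear productions in `rs` rewrite the nonterminal `A` into the
sentential form `u B w` in finitely many (possibly zero) steps. -/
inductive LinReaches {T N : Type} (rs : List (LinearRule T N)) :
    N → List T → N → List T → Prop
  | refl (A : N) : LinReaches rs A [] A []
  | step {A B C : N} {u v w z : List T}
      (hr : (⟨A, Sum.inr (u, B, w)⟩ : LinearRule T N) ∈ rs)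
      (hB : LinReaches rs B v C z) :
      LinReaches rs A (u ++ v) C (z ++ w)

namespace LinReaches

variable {T N : Type} {rs : List (LinearRule T N)} {A B C : N} {u v w x y z : List T}

lemma trans (hAB : LinReaches rs A u B w) (hBC : LinReaches rs B v C z) :
    LinReaches rs A (u ++ v) C (z ++ w) := by
  induction hAB with
  | refl => simpa using hBC
  | step hr _ ih => simpa using step hr (ih hBC)

lemma derives (hAB : LinReaches rs A u B w) (hB : LinDerives rs B x) :
    LinDerives rs A (u ++ x ++ w) := by
  induction hAB with
  | refl => simpa using hB
  | step hr _ ih => simpa using LinDerives.step hr (ih hB)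

lemma pow (hA : LinReaches rs A v A y) (n : ℕ) :
    LinReaches rs A (wordPow v n) A (wordPow y n) := by
  induction n with
  | zero => exact refl A
  | succ n ih => rw [wordPow_succ' y]; exact hA.trans ih

lemma derives_wordPow (hAB : LinReaches rs A u B z) (hB : LinReaches rs B v B y)
    (hx : LinDerives rs B x) (n : ℕ) :
    LinDerives rs A (u ++ wordPow v n ++ x ++ wordPow y n ++ z) := by
  simpa using hAB.derives ((hB.pow n).derives hx)

lemma length_eq {G : LinearGrammar T} {g h : ℕ} (hG : G.IsRated g h) {A B : G.NT}
    (hAB : LinReaches G.rules A u B w) : h * w.length = g * u.length := by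
  induction hAB with
  | refl => rfl
  | step hr _ ih =>
    rw [List.length_append, List.length_append, Nat.mul_add, Nat.mul_add, ih, hG _ hr _ _ _ rfl,
      Nat.add_comm]

lemma mul_length_append {G : LinearGrammar T} {g h : ℕ} (hG : G.IsRated g h) {A B : G.NT}
    (hAB : LinReaches G.rules A u B w) (x : List T) :
    h * (u ++ x ++ w).length = (g + h) * u.length + h * x.length := by
  have hw := hAB.length_eq hG
  simp only [List.length_append]
  linarith

end LinReaches

/-- `HasLoopBetween rs A p m n`: some derivation of the word `p` from the nonterminal `A` has the
form `A ⇒* u B z ⇒* u v B y z ⇒* u v x y z`, where the nonempty word `v` lies between the positions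
`m` and `n` of `p`. -/
def HasLoopBetween {T N : Type} (rs : List (LinearRule T N)) (A : N) (p : List T) (m n : ℕ) :
    Prop :=
  ∃ B u v x y z, p = u ++ v ++ x ++ y ++ z ∧ LinReaches rs A u B z ∧ LinReaches rs B v B y ∧
    LinDerives rs B x ∧ v ≠ [] ∧ m ≤ u.length ∧ u.length + v.length ≤ n

namespace HasLoopBetween

variable {T N : Type} {rs : List (LinearRule T N)} {A B : N} {u w p : List T} {m m' n n' : ℕ}

lemma mono (hp : HasLoopBetween rs A p m n) (hm : m' ≤ m) (hn : n ≤ n') :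
    HasLoopBetween rs A p m' n' := by
  obtain ⟨B, u, v, x, y, z, hp, hAB, hB, hx, hv, hmu, huv⟩ := hp
  exact ⟨B, u, v, x, y, z, hp, hAB, hB, hx, hv, hm.trans hmu, huv.trans hn⟩

lemma of_reaches (hAB : LinReaches rs A u B w) (hp : HasLoopBetween rs B p m n) :
    HasLoopBetween rs A (u ++ p ++ w) (u.length + m) (u.length + n) := by
  obtain ⟨C, u', v, x, y, z, rfl, hBC, hC, hx, hv, hm, hn⟩ := hp
  refine ⟨C, u ++ u', v, x, y, z ++ w, by simp, hAB.trans hBC, hC, hx, hv, ?_, ?_⟩ <;>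
    simp only [List.length_append] <;> omega

end HasLoopBetween

/-- The length of the terminal word at the left end of the right-hand side of a production, that is,
of `u` both in `A → u` and in `A → u B w`. It bounds how far one production advances a cut. -/
def LinearRule.leftLength {T N : Type} (r : LinearRule T N) : ℕ :=
  r.output.elim List.length fun t ↦ t.1.length

lemma LinearRule.exists_leftLength_le {T N : Type} (rs : List (LinearRule T N)) :
    ∃ M, ∀ r ∈ rs, r.leftLength ≤ M :=
  ⟨(rs.map leftLength).sum, fun _ hr ↦ List.le_sum_of_mem (List.mem_map_of_mem hr)⟩

namespace LinDerives

lemma mem_map_input {T N : Type} {rs : List (LinearRule T N)} {A : N} {p : List T}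
    (hA : LinDerives rs A p) : A ∈ rs.map LinearRule.input := by
  cases hA with
  | terminal hr | step hr _ => exact List.mem_map_of_mem hr

variable {T : Type} {G : LinearGrammar T} {g h M : ℕ} {A : G.NT} {p : List T}

lemma exists_cut (hG : G.IsRated g h) (hM : ∀ r ∈ G.rules, r.leftLength ≤ M)
    (hA : LinDerives G.rules A p) {n : ℕ} (hp : (g + h) * (n + M) < h * p.length) :
    ∃ B u x w, p = u ++ x ++ w ∧ LinReaches G.rules A u B w ∧ LinDerives G.rules B x ∧
      n ≤ u.length ∧ u.length ≤ n + M := by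
  induction hA generalizing n with
  | @terminal A u hr =>
    have hu : u.length ≤ M := hM _ hr
    nlinarith
  | @step A B u w p hr hB ih =>
    have hu : u.length ≤ M := hM _ hr
    have hw : h * w.length = g * u.length := hG _ hr u w B rfl
    rcases le_total n u.length with hn | hn
    · exact ⟨B, u, p, w, rfl, by simpa using LinReaches.step hr (.refl B), hB, hn, by omega⟩
    · obtain ⟨m, rfl⟩ := Nat.exists_eq_add_of_le hn
      simp only [List.length_append] at hp
      obtain ⟨C, v, x, z, rfl, hBC, hC, hmv, hvm⟩ := ih (n := m) (by linarith)
      refine ⟨C, u ++ v, x, z ++ w, by simp, .step hr hBC, hC, ?_, ?_⟩ <;>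
        simp only [List.length_append] <;> omega

open Classical in
/-- Follows a derivation through successive cuts, with `s` the set of nonterminals already met and
`k` a bound on the number of those still to be met. -/
lemma exists_reaches_mem_or_hasLoopBetween (hG : G.IsRated g h)
    (hM : ∀ r ∈ G.rules, r.leftLength ≤ M) (hA : LinDerives G.rules A p) {s : Finset G.NT} {k : ℕ}
    (hs : ((G.rules.map LinearRule.input).toFinset \ s).card ≤ k)
    (hp : (g + h) * (k * (M + 1) + M) < h * p.length) :
    (∃ B ∈ s, ∃ u x w, p = u ++ x ++ w ∧ LinReaches G.rules A u B w ∧ LinDerives G.rules B x ∧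
      u.length ≤ k * (M + 1)) ∨
    HasLoopBetween G.rules A p 0 (k * (M + 1)) := by
  induction k generalizing A p s with
  | zero =>
    have hA_mem : A ∈ s := Finset.sdiff_eq_empty_iff_subset.1 (Finset.card_eq_zero.1 (by omega))
      (List.mem_toFinset.2 hA.mem_map_input)
    exact .inl ⟨A, hA_mem, [], p, [], by simp, .refl A, hA, by simp⟩
  | succ k ih =>
    by_cases hA_mem : A ∈ s
    · exact .inl ⟨A, hA_mem, [], p, [], by simp, .refl A, hA, by simp⟩
    have hcard : ((G.rules.map LinearRule.input).toFinset \ insert A s).card ≤ k := by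
      have hA_new : A ∈ (G.rules.map LinearRule.input).toFinset \ s :=
        Finset.mem_sdiff.2 ⟨List.mem_toFinset.2 hA.mem_map_input, hA_mem⟩
      rw [Finset.sdiff_insert, Finset.card_erase_of_mem hA_new]
      omega
    rw [Nat.add_one_mul k] at hp ⊢
    obtain ⟨B, v, q, y, rfl, hAB, hB, hv_pos, hv_le⟩ := hA.exists_cut hG hM (n := 1)
      ((Nat.mul_le_mul_left _ (by omega)).trans_lt hp)
    rw [hAB.mul_length_append hG] at hp
    rcases ih hB hcard (by nlinarith) with ⟨C, hC, u, x, w, rfl, hBC, hx, hu⟩ | hloop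
    · have hAC := hAB.trans hBC
      have huv : (v ++ u).length ≤ k * (M + 1) + (M + 1) := by
        rw [List.length_append]; omega
      rcases Finset.mem_insert.1 hC with rfl | hCs
      · have hvu : v ++ u ≠ [] :=
          List.append_ne_nil_of_left_ne_nil (List.ne_nil_of_length_pos hv_pos) u
        exact .inr ⟨C, [], v ++ u, x, w ++ y, [], by simp, .refl C, hAC, hx, hvu, by simp,
          by simpa using huv⟩
      · exact .inl ⟨C, hCs, v ++ u, x, w ++ y, by simp, hAC, hx, huv⟩
    · exact .inr ((hloop.of_reaches hAB).mono (Nat.zero_le _) (by omega))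

end LinDerives

theorem LinearGrammar.IsRated.exists_hasLoopBetween {T : Type} {G : LinearGrammar T} {g h : ℕ}
    (hG : G.IsRated g h) :
    ∃ K, ∀ p ∈ G.language, ∀ n, (g + h) * (n + K) < h * p.length →
      HasLoopBetween G.rules G.start p n (n + K) := by
  classical
  obtain ⟨M, hM⟩ := LinearRule.exists_leftLength_le G.rules
  obtain ⟨k, hk⟩ : ∃ k, ((G.rules.map LinearRule.input).toFinset \ ∅).card ≤ k := ⟨_, le_rfl⟩
  refine ⟨k * (M + 1) + M + M, fun p hp n hn ↦ ?_⟩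
  obtain ⟨A, u, q, w, rfl, hSA, hA, hnu, hun⟩ := LinDerives.exists_cut hG hM hp (n := n)
    ((Nat.mul_le_mul_left _ (by omega)).trans_lt hn)
  rw [hSA.mul_length_append hG] at hn
  have hloop : HasLoopBetween G.rules A q 0 (k * (M + 1)) :=
    (hA.exists_reaches_mem_or_hasLoopBetween hG hM hk (by nlinarith)).resolve_left (by simp)
  exact (hloop.of_reaches hSA).mono (by omega) (by omega)

theorem IsRatedLinearLang.pumping {T : Type} {L : Set (List T)} {g h : ℕ}
    (hL : IsRatedLinearLang g h L) :
    ∃ K, ∀ p ∈ L, ∀ n, (g + h) * (n + K) < h * p.length →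
      ∃ u v x y z, p = u ++ v ++ x ++ y ++ z ∧ v ≠ [] ∧ n ≤ u.length ∧
        u.length + v.length ≤ n + K ∧ h * y.length = g * v.length ∧ h * z.length = g * u.length ∧
        ∀ i, u ++ wordPow v i ++ x ++ wordPow y i ++ z ∈ L := by
  obtain ⟨G, hG, hGL⟩ := hL
  obtain ⟨K, hK⟩ := hG.exists_hasLoopBetween
  refine ⟨K, fun p hp n hn ↦ ?_⟩
  have hp_ne : p ≠ [] := by
    rintro rfl
    simp at hn
  obtain ⟨B, u, v, x, y, z, rfl, hSB, hB, hx, hv, hnu, huv⟩ := hK p ((hGL p hp_ne).1 hp) n hn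
  have hy := hB.length_eq hG
  have hz := hSB.length_eq hG
  have hx_ne : x ≠ [] := by
    rintro rfl
    simp only [List.length_append, List.length_nil] at hn
    nlinarith
  exact ⟨u, v, x, y, z, rfl, hv, hnu, huv, hy, hz,
    fun i ↦ (hGL _ (by simp [hx_ne])).2 (hSB.derives_wordPow hB hx i)⟩

section Regular

variable {T σ : Type} {D : DFA T σ} {g h : ℕ}

/-- The productions simulating the automaton `D` from both ends of the input, at rate `g / h`. The
nonterminal `(s, F)` stands for the words leading `D` from `s` into `F`, so reading `u` from the
left and `w` from the right moves `s` forward and replaces `F` by its preimage. -/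
def ratedRuleSet (D : DFA T σ) (g h : ℕ) : Set (LinearRule T (σ × Set σ)) :=
  {r | match r.output with
    | .inl u => u.length < g + h ∧ D.evalFrom r.input.1 u ∈ r.input.2
    | .inr (u, B, w) => u.length = h ∧ w.length = g ∧
        B = (D.evalFrom r.input.1 u, {t | D.evalFrom t w ∈ r.input.2})}

lemma finite_ratedRuleSet [Finite T] [Finite σ] (D : DFA T σ) (g h : ℕ) :
    (ratedRuleSet D g h).Finite := by
  have hwords (n : ℕ) : {u : List T | u.length ≤ n}.Finite := List.finite_length_le T n
  refine (((Set.finite_univ.prod (hwords (g + h))).image fun (A, u) ↦ ⟨A, .inl u⟩).union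
    (((Set.finite_univ.prod ((hwords h).prod (Set.finite_univ.prod (hwords g)))).image
      fun (A, t) ↦ ⟨A, .inr t⟩))).subset ?_
  rintro ⟨A, u | ⟨u, B, w⟩⟩ hr
  · exact .inl ⟨(A, u), ⟨trivial, hr.1.le⟩, rfl⟩
  · exact .inr ⟨(A, u, B, w), ⟨trivial, hr.1.le, trivial, hr.2.1.le⟩, rfl⟩

variable {rs : List (LinearRule T (σ × Set σ))} {A : σ × Set σ} {p : List T}

lemma evalFrom_mem_of_linDerives (hrs : ∀ r ∈ rs, r ∈ ratedRuleSet D g h)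
    (hA : LinDerives rs A p) : D.evalFrom A.1 p ∈ A.2 := by
  induction hA with
  | terminal hr => exact (hrs _ hr).2
  | step hr _ ih =>
    obtain ⟨-, -, hB⟩ := hrs _ hr
    rw [hB] at ih
    rwa [DFA.evalFrom_of_append, DFA.evalFrom_of_append]

lemma linDerives_of_evalFrom_mem (hgh : 0 < g + h) (hrs : ∀ r ∈ ratedRuleSet D g h, r ∈ rs)
    (hA : D.evalFrom A.1 p ∈ A.2) : LinDerives rs A p := by
  induction hn : p.length using Nat.strong_induction_on generalizing A p with
  | _ n ih =>
    rcases lt_or_ge p.length (g + h) with hp | hp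
    · exact .terminal (hrs _ ⟨hp, hA⟩)
    · obtain ⟨u, x, w, rfl, hu, hw⟩ : ∃ u x w, p = u ++ x ++ w ∧ u.length = h ∧ w.length = g :=
        ⟨p.take h, (p.drop h).take (p.length - h - g), (p.drop h).drop (p.length - h - g),
          by simp, by simp; omega, by simp; omega⟩
      rw [DFA.evalFrom_of_append, DFA.evalFrom_of_append] at hA
      simp only [List.length_append] at hn
      have hx : LinDerives rs (D.evalFrom A.1 u, {t | D.evalFrom t w ∈ A.2}) x :=
        ih x.length (by omega) hA rfl
      exact .step (hrs _ ⟨hu, hw, rfl⟩) hx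

end Regular

theorem isRatedLinearLang_of_isRegular {T : Type} [Finite T] {L : Language T} {g h : ℕ}
    (hgh : 0 < g + h) (hL : L.IsRegular) : IsRatedLinearLang g h L := by
  obtain ⟨σ, _, D, rfl⟩ := hL
  have hfin := finite_ratedRuleSet D g h
  have hmem (r : LinearRule T (σ × Set σ)) : r ∈ hfin.toFinset.toList ↔ r ∈ ratedRuleSet D g h := by
    simp
  refine ⟨⟨σ × Set σ, (D.start, D.accept), hfin.toFinset.toList⟩, ?_, fun p _ ↦ ⟨?_, ?_⟩⟩
  · rintro ⟨A, _⟩ hr u w B rfl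
    obtain ⟨rfl, rfl, -⟩ := (hmem _).1 hr
    exact Nat.mul_comm _ _
  · exact linDerives_of_evalFrom_mem (A := (D.start, D.accept)) hgh fun r ↦ (hmem r).2
  · exact evalFrom_mem_of_linDerives fun r ↦ (hmem r).1

/-- The word `a²ba^qb^m`, whose membership in `sqLang` depends on its second block of `a`s. -/
def sqWord (q m : ℕ) : List (Fin 2) :=
  [0, 0, 1] ++ List.replicate q 0 ++ List.replicate m 1

lemma length_sqWord (q m : ℕ) : (sqWord q m).length = q + m + 3 := by
  simp only [sqWord, List.length_append, List.length_replicate, List.length_cons, List.length_nil]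
  omega

lemma sqWord_mem_sqLang {q m : ℕ} (hq : 2 ≤ q) (hm : 2 ≤ m) (hsq : IsSquare q) :
    sqWord q m ∈ sqLang :=
  ⟨2, q, m, le_rfl, hq, hm, hsq.exists_sq, rfl⟩

lemma isSquare_of_sqWord_mem_sqLang {q m : ℕ} (hmem : sqWord q m ∈ sqLang) : IsSquare q := by
  obtain ⟨r, q', m', hr, -, -, hsq, heq⟩ := hmem
  obtain ⟨r, rfl⟩ := Nat.exists_eq_add_of_le' hr
  cases r with
  | zero =>
    have hcount := congrArg (List.count 0) heq
    have hq : q = q' := by simpa [sqWord, List.count_replicate] using hcount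
    rwa [isSquare_iff_exists_sq, hq]
  | succ r => simp [sqWord, List.replicate_succ] at heq

lemma exists_replicate_of_sqWord_eq_append {q m : ℕ} {u v x y z : List (Fin 2)}
    (heq : sqWord q m = u ++ v ++ x ++ y ++ z) (hu : 3 ≤ u.length)
    (huv : u.length + v.length ≤ q + 3) (hyz : y.length + z.length ≤ m) :
    ∃ a b c a' b' c', q = a + b + c ∧ m = a' + b' + c' ∧
      u = [0, 0, 1] ++ List.replicate a 0 ∧ v = List.replicate b 0 ∧
      x = List.replicate c 0 ++ List.replicate a' 1 ∧
      y = List.replicate b' 1 ∧ z = List.replicate c' 1 := by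
  obtain ⟨s, hs, hsx⟩ : ∃ s, [0, 0, 1] ++ List.replicate q 0 = (u ++ v) ++ s ∧
      x ++ (y ++ z) = s ++ List.replicate m 1 :=
    exists_eq_append_of_append_eq (by simpa [sqWord] using heq) (by simpa using huv)
  have hsx_len := congrArg List.length hsx
  simp only [List.length_append, List.length_replicate] at hsx_len
  obtain ⟨t, rfl, ht⟩ := exists_eq_append_of_append_eq hsx (by omega)
  rw [List.append_assoc] at hs
  obtain ⟨u', rfl, hu'⟩ := exists_eq_append_of_append_eq hs.symm hu
  obtain ⟨hq, hu'_eq, hvs⟩ := List.append_eq_replicate_iff.1 hu'.symm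
  obtain ⟨-, hv, hs⟩ := List.append_eq_replicate_iff.1 hvs
  obtain ⟨hm, ht_eq, hyz⟩ := List.append_eq_replicate_iff.1 ht.symm
  obtain ⟨-, hy, hz⟩ := List.append_eq_replicate_iff.1 hyz
  rw [List.length_append, ← Nat.add_assoc] at hq hm
  exact ⟨_, _, _, _, _, _, hq.symm, hm.symm, congrArg _ hu'_eq, hv, congrArg₂ _ hs ht_eq, hy, hz⟩

lemma pump_sqWord {q m : ℕ} {u v x y z : List (Fin 2)} (heq : sqWord q m = u ++ v ++ x ++ y ++ z)
    (hu : 3 ≤ u.length) (huv : u.length + v.length ≤ q + 3) (hyz : y.length + z.length ≤ m)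
    (i : ℕ) :
    u ++ wordPow v (i + 1) ++ x ++ wordPow y (i + 1) ++ z =
      sqWord (q + i * v.length) (m + i * y.length) := by
  obtain ⟨a, b, c, a', b', c', rfl, rfl, rfl, rfl, rfl, rfl, rfl⟩ :=
    exists_replicate_of_sqWord_eq_append heq hu huv hyz
  simp only [sqWord, wordPow_replicate, List.length_replicate,
    show a + b + c + i * b = a + (i + 1) * b + c by ring,
    show a' + b' + c' + i * b' = a' + (i + 1) * b' + c' by ring,
    List.replicate_add, List.append_assoc]

lemma not_isSquare_sq_add {j d : ℕ} (hd : 0 < d) (hdj : d ≤ 2 * j) : ¬ IsSquare (j ^ 2 + d) := by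
  simpa only [isSquare_iff_exists_sq, eq_comm] using
    Nat.not_exists_sq' (m := j) (n := j ^ 2 + d) (by omega) (by linarith)

theorem sqLang_not_evenLinear : ¬ IsRatedLinearLang 1 1 sqLang := by
  intro hL
  obtain ⟨K, hK⟩ := hL.pumping
  obtain ⟨j, hKj, hj⟩ : ∃ j, K < j ∧ 2 ≤ j := ⟨K + 2, by omega, by omega⟩
  have hjq : j ≤ j ^ 2 := Nat.le_self_pow two_ne_zero j
  have hmem : sqWord (j ^ 2) (j ^ 2 + 3) ∈ sqLang :=
    sqWord_mem_sqLang (hj.trans hjq) (by omega) ⟨j, sq j⟩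
  obtain ⟨u, v, x, y, z, heq, hv, hu, huv, hy, hz, hpump⟩ :=
    hK _ hmem 3 (by rw [length_sqWord]; omega)
  have hmem_pumped := hpump 2
  rw [pump_sqWord heq hu (by omega) (by omega), one_mul] at hmem_pumped
  exact not_isSquare_sq_add (List.length_pos_of_ne_nil hv) (by omega)
    (isSquare_of_sqWord_mem_sqLang hmem_pumped)

/-- The language `{aʳ b a^q bᵐ : r, q, m ≥ 2, q a perfect square}` is not
even-linear (i.e. not `1`-rated linear); consequently it is not regular
(Example 12). -/
theorem sqLang_not_evenLinear_not_regular :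
    ¬ IsRatedLinearLang 1 1 sqLang ∧ ¬ sqLang.IsRegular :=
  ⟨sqLang_not_evenLinear,
    fun hreg ↦ sqLang_not_evenLinear (isRatedLinearLang_of_isRegular (by norm_num) hreg)⟩
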